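/- Let δ > 3 and let V : ℝ³ → ℂ be continuously differentiable with |V(x)| ≤ M ⟨x⟩^{-δ} and |∇V(x)| ≤ M ⟨x⟩^{-δ} for all x ∈ ℝ³ and some M > 0. Then there exists a constant C > 0 such that for all real μ ≥ 1, | ∫∫_{ℝ³×ℝ³} V(x) V(y) · cos(2μ |x − y|) · |x − y|^{-1} dx dy | ≤ C/μ. -/

import Mathlib

open MeasureTheory

/-- Three-dimensional Euclidean space `ℝ³`. -/
abbrev E3 : Type := EuclideanSpace ℝ (Fin 3)

/-- The Japanese bracket `⟨x⟩ := (1 + |x|²)^{1/2}`. -/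
noncomputable def jap (x : E3) : ℝ := Real.sqrt (1 + ‖x‖ ^ 2)

/-!
Fix `y` and put `z = x - y`. In polar coordinates the inner integral becomes a family of radial
integrals of `cos (k r) r ^ (n + 1) / r` against `V(y + r θ)`, in dimension `n + 2`, and one radial
integration by parts gains the factor `1 / k`: there is no boundary term at `0` because of the
weight `r ^ n sin (k r)`, and none at infinity because the boundary term and its derivative are
integrable along almost every ray. The remaining amplitude `r⁻² (n V + r ∂ᵣV)` has a locally
integrable singularity and is otherwise controlled by `V` and `∇V` in `L¹ ∩ L^∞`, hence its `L¹`
norm is bounded uniformly in `y`. Integrating the bound against `|V(y)|` gives the result.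
-/

open Filter Metric Module Set Topology

section PolarCoordinates

variable {E G : Type*} [NormedAddCommGroup E] [NormedSpace ℝ E] [FiniteDimensional ℝ E]
  [MeasurableSpace E] [BorelSpace E] (ν : Measure E) [ν.IsAddHaarMeasure] {n : ℕ}
  [NormedAddCommGroup G]

theorem measurePreserving_homeomorphUnitSphereProd_symm (hn : finrank ℝ E = n + 1) :
    MeasurePreserving (homeomorphUnitSphereProd E).symm
      (ν.toSphere.prod (Measure.volumeIoiPow n)) (ν.comap (↑)) := by
  have hpres := ν.measurePreserving_homeomorphUnitSphereProd
  rw [hn, Nat.add_sub_cancel] at hpres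
  exact hpres.symm (homeomorphUnitSphereProd E).toMeasurableEquiv

theorem integrable_polar (hn : finrank ℝ E = n + 1) {f : E → G} (hf : Integrable f ν) :
    Integrable (fun p : sphere (0 : E) 1 × Ioi (0 : ℝ) ↦ f ((p.2 : ℝ) • (p.1 : E)))
      (ν.toSphere.prod (Measure.volumeIoiPow n)) :=
  ((measurePreserving_homeomorphUnitSphereProd_symm ν hn).integrable_comp_emb
    (homeomorphUnitSphereProd E).symm.measurableEmbedding).2
    ((integrableOn_iff_comap_subtypeVal (measurableSet_singleton 0).compl).1 hf.integrableOn)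

variable [NormedSpace ℝ G]

theorem integrable_volumeIoiPow_iff (n : ℕ) (f : ℝ → G) :
    Integrable (fun r : Ioi (0 : ℝ) ↦ f r) (Measure.volumeIoiPow n) ↔
      IntegrableOn (fun r ↦ r ^ n • f r) (Ioi 0) := by
  rw [Measure.volumeIoiPow, integrable_withDensity_iff_integrable_smul' (by fun_prop) (by simp),
    integrableOn_iff_comap_subtypeVal measurableSet_Ioi]
  refine integrable_congr (.of_forall fun r ↦ ?_)
  simp only [Function.comp_apply, ENNReal.toReal_ofReal (pow_nonneg (mem_Ioi.1 r.2).le n)]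

theorem integral_volumeIoiPow (n : ℕ) (f : ℝ → G) :
    ∫ r : Ioi (0 : ℝ), f r ∂Measure.volumeIoiPow n = ∫ r in Ioi (0 : ℝ), r ^ n • f r := by
  rw [Measure.volumeIoiPow, integral_withDensity_eq_integral_toReal_smul (by fun_prop) (by simp),
    ← integral_subtype_comap measurableSet_Ioi]
  refine integral_congr_ae (.of_forall fun r ↦ ?_)
  simp only [ENNReal.toReal_ofReal (pow_nonneg (mem_Ioi.1 r.2).le n)]

theorem integral_polar (hn : finrank ℝ E = n + 1) {f : E → G} (hf : Integrable f ν) :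
    ∫ z, f z ∂ν =
      ∫ θ : sphere (0 : E) 1, (∫ r in Ioi (0 : ℝ), r ^ n • f (r • (θ : E))) ∂ν.toSphere := by
  have : Nontrivial E := Module.nontrivial_of_finrank_pos (R := ℝ) (by omega)
  calc ∫ z, f z ∂ν = ∫ z : ({0}ᶜ : Set E), f z ∂ν.comap (↑) := by
        rw [integral_subtype_comap (measurableSet_singleton _).compl f, restrict_compl_singleton]
    _ = ∫ p : sphere (0 : E) 1 × Ioi (0 : ℝ), f ((p.2 : ℝ) • (p.1 : E))
          ∂ν.toSphere.prod (Measure.volumeIoiPow n) :=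
        ((measurePreserving_homeomorphUnitSphereProd_symm ν hn).integral_comp
          (homeomorphUnitSphereProd E).symm.measurableEmbedding _).symm
    _ = ∫ θ : sphere (0 : E) 1, (∫ r in Ioi (0 : ℝ), r ^ n • f (r • (θ : E))) ∂ν.toSphere := by
        rw [integral_prod _ (integrable_polar ν hn hf)]
        exact integral_congr_ae
          (.of_forall fun θ ↦ integral_volumeIoiPow n fun r ↦ f (r • (θ : E)))

theorem ae_integrableOn_ray (hn : finrank ℝ E = n + 1) {f : E → G} (hf : Integrable f ν) :
    ∀ᵐ θ : sphere (0 : E) 1 ∂ν.toSphere,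
      IntegrableOn (fun r : ℝ ↦ r ^ n • f (r • (θ : E))) (Ioi 0) := by
  filter_upwards [(integrable_polar ν hn hf).prod_right_ae] with θ hθ
  exact (integrable_volumeIoiPow_iff n fun r ↦ f (r • (θ : E))).1 hθ

theorem integrableOn_ball_norm_pow_inv {m : ℕ} (hm : m < finrank ℝ E) (R : ℝ) :
    IntegrableOn (fun z : E ↦ (‖z‖ ^ m)⁻¹) (ball 0 R) ν := by
  have : Nontrivial E := Module.nontrivial_of_finrank_pos (R := ℝ) (by omega)
  rw [integrableOn_fun_norm_addHaar ν (f := fun r ↦ (r ^ m)⁻¹)]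
  have hpow : IntegrableOn (fun r : ℝ ↦ r ^ (finrank ℝ E - 1 - m)) (Ioo 0 R) :=
    (Continuous.integrableOn_Icc (by fun_prop)).mono_set Ioo_subset_Icc_self
  refine hpow.congr_fun (fun r hr ↦ ?_) measurableSet_Ioo
  exact pow_sub₀ r hr.1.ne' (by omega)

end PolarCoordinates

section RadialDivergence

theorem integral_Ioi_eq_zero_of_hasDerivAt {G : Type*} [NormedAddCommGroup G] [NormedSpace ℝ G]
    [CompleteSpace G] {g g' : ℝ → G} {a : ℝ} (hderiv : ∀ r ∈ Ioi a, HasDerivAt g (g' r) r)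
    (hg' : IntegrableOn g' (Ioi a)) (hg : IntegrableOn g (Ioi a))
    (hlim : Tendsto g (𝓝[>] a) (𝓝 0)) : ∫ r in Ioi a, g' r = 0 := by
  have hext : ∀ r ∈ Ioi a, Function.update g a 0 =ᶠ[𝓝 r] g := fun r hr ↦
    (eventually_ne_nhds (mem_Ioi.1 hr).ne').mono fun s hs ↦ Function.update_of_ne hs 0 g
  have hcont : ContinuousWithinAt (Function.update g a 0) (Ici a) a := by
    rwa [continuousWithinAt_update_same, Ici_sdiff_left]
  have htop : Tendsto (Function.update g a 0) atTop (𝓝 0) :=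
    (tendsto_zero_of_hasDerivAt_of_integrableOn_Ioi hderiv hg' hg).congr'
      ((eventually_ne_atTop a).mono fun s hs ↦ (Function.update_of_ne hs 0 g).symm)
  simpa using integral_Ioi_of_hasDerivAt_of_tendsto hcont
    (fun r hr ↦ (hderiv r hr).congr_of_eventuallyEq (hext r hr)) hg' htop

variable {E G : Type*} [NormedAddCommGroup E] [NormedSpace ℝ E] [FiniteDimensional ℝ E]
  [MeasurableSpace E] [BorelSpace E] [NormedAddCommGroup G] [NormedSpace ℝ G] [CompleteSpace G]

/- Since `div (F(z) z / ‖z‖) = r ^ (-n) ∂ᵣ (r ^ n F)` with `r = ‖z‖`, the function `D` below is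
the divergence of the radial field with component `F`. -/
theorem integral_eq_zero_of_hasDerivAt_ray (ν : Measure E) [ν.IsAddHaarMeasure] {n : ℕ}
    (hn : finrank ℝ E = n + 1) {D F : E → G} (hD : Integrable D ν) (hF : Integrable F ν)
    (hderiv : ∀ θ : E, ‖θ‖ = 1 → ∀ r : ℝ, 0 < r →
      HasDerivAt (fun s : ℝ ↦ s ^ n • F (s • θ)) (r ^ n • D (r • θ)) r)
    (hlim : ∀ θ : E, ‖θ‖ = 1 → Tendsto (fun s : ℝ ↦ s ^ n • F (s • θ)) (𝓝[>] 0) (𝓝 0)) :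
    ∫ z, D z ∂ν = 0 := by
  rw [integral_polar ν hn hD]
  refine integral_eq_zero_of_ae ?_
  filter_upwards [ae_integrableOn_ray ν hn hD, ae_integrableOn_ray ν hn hF] with θ hDθ hFθ
  have hθ : ‖(θ : E)‖ = 1 := norm_eq_of_mem_sphere θ
  exact integral_Ioi_eq_zero_of_hasDerivAt (hderiv θ hθ) hDθ hFθ (hlim θ hθ)

end RadialDivergence

section OscillatoryIntegral

variable {E G : Type*} [NormedAddCommGroup E] [NormedAddCommGroup G] [NormedSpace ℝ G]

/-- The oscillating radial kernel `cos (k‖z‖) / ‖z‖`. By the convention `0⁻¹ = 0` it vanishes at the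
origin. -/
noncomputable def cosKernel (k : ℝ) (z : E) : ℝ := Real.cos (k * ‖z‖) * ‖z‖⁻¹

theorem abs_cosKernel_le (k : ℝ) (z : E) : |cosKernel k z| ≤ ‖z‖⁻¹ := by
  rw [cosKernel, abs_mul, abs_inv, abs_norm]
  exact mul_le_of_le_one_left (by positivity) (Real.abs_cos_le_one _)

theorem measurable_cosKernel [MeasurableSpace E] [OpensMeasurableSpace E] (k : ℝ) :
    Measurable (cosKernel k : E → ℝ) := by
  unfold cosKernel
  fun_prop

theorem integrable_cosKernel_smul [MeasurableSpace E] [OpensMeasurableSpace E] {ν : Measure E}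
    {W : E → G} (hW : AEStronglyMeasurable W ν) (hint : Integrable (fun z ↦ ‖z‖⁻¹ • W z) ν)
    (k : ℝ) : Integrable (fun z ↦ cosKernel k z • W z) ν := by
  refine hint.mono ((measurable_cosKernel k).aestronglyMeasurable.smul hW) (.of_forall fun z ↦ ?_)
  simp only [norm_smul, norm_inv, norm_norm]
  gcongr
  exact abs_cosKernel_le k z

variable [NormedSpace ℝ E]

/-- The function `‖z‖⁻² (n W(z) + W'(z) z)`, that is `r⁻¹ (n / r + ∂ᵣ) W` in polar coordinates. In
dimension `n + 2` it is the amplitude left over when `cos (k‖z‖) / ‖z‖` is integrated by parts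
radially against `W`. -/
noncomputable def radialRemainder (n : ℕ) (W : E → G) (z : E) : G :=
  (‖z‖ ^ 2)⁻¹ • ((n : ℝ) • W z + fderiv ℝ W z z)

theorem norm_radialRemainder_le (n : ℕ) (W : E → G) (z : E) :
    ‖radialRemainder n W z‖ ≤
      ‖((n : ℝ) * (‖z‖ ^ 2)⁻¹) • W z‖ + ‖‖z‖⁻¹ • fderiv ℝ W z‖ := by
  have hradial : (‖z‖ ^ 2)⁻¹ * ‖fderiv ℝ W z z‖ ≤ ‖z‖⁻¹ * ‖fderiv ℝ W z‖ :=
    calc (‖z‖ ^ 2)⁻¹ * ‖fderiv ℝ W z z‖ ≤ (‖z‖ ^ 2)⁻¹ * (‖fderiv ℝ W z‖ * ‖z‖) := by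
          gcongr; exact (fderiv ℝ W z).le_opNorm z
      _ = ‖z‖⁻¹ * ‖fderiv ℝ W z‖ := by
          rcases eq_or_ne ‖z‖ 0 with hz | hz
          · simp only [hz, mul_zero, inv_zero, zero_mul]
          · field_simp
  calc ‖radialRemainder n W z‖
      ≤ (‖z‖ ^ 2)⁻¹ * (‖(n : ℝ) • W z‖ + ‖fderiv ℝ W z z‖) := by
        rw [radialRemainder, norm_smul, norm_inv, norm_pow, norm_norm]
        gcongr
        exact norm_add_le _ _
    _ ≤ ‖((n : ℝ) * (‖z‖ ^ 2)⁻¹) • W z‖ + ‖‖z‖⁻¹ • fderiv ℝ W z‖ := by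
        simp only [norm_smul, norm_mul, norm_inv, norm_pow, norm_norm]
        linarith

theorem pow_smul_sin_smul_ray (k : ℝ) (n : ℕ) (W : E → G) {θ : E} (hθ : ‖θ‖ = 1) {r : ℝ}
    (hr : 0 < r) :
    r ^ (n + 1) • (Real.sin (k * ‖r • θ‖) * ‖r • θ‖⁻¹) • W (r • θ) =
      (r ^ n * Real.sin (k * r)) • W (r • θ) := by
  rw [norm_smul, hθ, Real.norm_of_nonneg hr.le, mul_one, smul_smul]
  congr 1
  field_simp
  ring

theorem hasDerivAt_pow_smul_sin_smul_ray (k : ℝ) (n : ℕ) {W : E → G} (hW : Differentiable ℝ W)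
    {θ : E} (hθ : ‖θ‖ = 1) {r : ℝ} (hr : 0 < r) :
    HasDerivAt (fun s : ℝ ↦ (s ^ n * Real.sin (k * s)) • W (s • θ))
      (r ^ (n + 1) • (k • cosKernel k (r • θ) • W (r • θ) +
        Real.sin (k * ‖r • θ‖) • radialRemainder n W (r • θ))) r := by
  have hray : HasDerivAt (fun s : ℝ ↦ W (s • θ)) (fderiv ℝ W (r • θ) θ) r := by
    have hline : HasDerivAt (fun s : ℝ ↦ s • θ) θ r := by
      simpa using (hasDerivAt_id r).smul_const θ
    exact (hW (r • θ)).hasFDerivAt.comp_hasDerivAt r hline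
  have hsin : HasDerivAt (fun s : ℝ ↦ Real.sin (k * s)) (Real.cos (k * r) * k) r := by
    simpa using ((hasDerivAt_id r).const_mul k).sin
  refine (((hasDerivAt_pow n r).mul hsin).smul hray).congr_deriv ?_
  have hpow : (n : ℝ) * r ^ (n - 1) = n * r ^ n * r⁻¹ := by
    rcases n with _ | n
    · simp
    · rw [Nat.add_sub_cancel, pow_succ]; field_simp
  simp only [cosKernel, radialRemainder, norm_smul, hθ, Real.norm_of_nonneg hr.le, mul_one,
    map_smul, hpow, Pi.mul_apply]
  match_scalars <;> field_simp <;> ring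

variable [FiniteDimensional ℝ E] [MeasurableSpace E] [BorelSpace E] [CompleteSpace G]

theorem smul_integral_cosKernel_smul (ν : Measure E) [ν.IsAddHaarMeasure] {n : ℕ}
    (hn : finrank ℝ E = n + 2) {W : E → G} (hW : Differentiable ℝ W)
    (hint : Integrable (fun z ↦ ‖z‖⁻¹ • W z) ν) (hrem : Integrable (radialRemainder n W) ν)
    (k : ℝ) :
    k • ∫ z, cosKernel k z • W z ∂ν = -∫ z, Real.sin (k * ‖z‖) • radialRemainder n W z ∂ν := by
  have hsin : AEStronglyMeasurable (fun z : E ↦ Real.sin (k * ‖z‖)) ν := by fun_prop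
  have hsin_le : ∀ᵐ z : E ∂ν, ‖Real.sin (k * ‖z‖)‖ ≤ 1 :=
    .of_forall fun z ↦ Real.abs_sin_le_one _
  have hcosint : Integrable (fun z ↦ k • cosKernel k z • W z) ν :=
    (integrable_cosKernel_smul hW.continuous.aestronglyMeasurable hint k).smul k
  have hremint : Integrable (fun z ↦ Real.sin (k * ‖z‖) • radialRemainder n W z) ν :=
    hrem.bdd_smul 1 hsin hsin_le
  have hF : Integrable (fun z ↦ (Real.sin (k * ‖z‖) * ‖z‖⁻¹) • W z) ν := by
    simpa only [mul_smul, Pi.smul_def'] using hint.bdd_smul 1 hsin hsin_le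
  rw [← integral_smul, eq_neg_iff_add_eq_zero, ← integral_add hcosint hremint]
  refine integral_eq_zero_of_hasDerivAt_ray ν hn (hcosint.add hremint) hF
    (fun θ hθ r hr ↦ ?_) (fun θ hθ ↦ ?_)
  · refine (hasDerivAt_pow_smul_sin_smul_ray k n hW hθ hr).congr_of_eventuallyEq ?_
    exact (eventually_gt_nhds hr).mono fun s hs ↦ pow_smul_sin_smul_ray k n W hθ hs
  · have hcont : Continuous fun s : ℝ ↦ (s ^ n * Real.sin (k * s)) • W (s • θ) := by
      have := hW.continuous
      fun_prop
    refine Tendsto.congr' (f₁ := fun s : ℝ ↦ (s ^ n * Real.sin (k * s)) • W (s • θ)) ?_ ?_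
    · exact eventually_mem_nhdsWithin.mono fun s hs ↦ (pow_smul_sin_smul_ray k n W hθ hs).symm
    · simpa using hcont.continuousWithinAt.tendsto (x := 0) (s := Ioi 0)

theorem norm_integral_cosKernel_smul_le (ν : Measure E) [ν.IsAddHaarMeasure] {n : ℕ}
    (hn : finrank ℝ E = n + 2) {W : E → G} (hW : Differentiable ℝ W)
    (hint : Integrable (fun z ↦ ‖z‖⁻¹ • W z) ν) (hrem : Integrable (radialRemainder n W) ν)
    {k : ℝ} (hk : k ≠ 0) :
    ‖∫ z, cosKernel k z • W z ∂ν‖ ≤ (∫ z, ‖radialRemainder n W z‖ ∂ν) / |k| := by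
  rw [le_div_iff₀' (abs_pos.2 hk), ← Real.norm_eq_abs, ← norm_smul,
    smul_integral_cosKernel_smul ν hn hW hint hrem k, norm_neg]
  refine norm_integral_le_of_norm_le hrem.norm (.of_forall fun z ↦ ?_)
  rw [norm_smul]
  exact mul_le_of_le_one_left (norm_nonneg _) (Real.abs_sin_le_one _)

end OscillatoryIntegral

section Translates

variable {α G : Type*} [NormedAddCommGroup G] {s : Set α} {κ : α → ℝ} {f : α → G} {M c : ℝ}

theorem norm_smul_le_indicator_add [NormedSpace ℝ G] (hc : 0 ≤ c) (hκ : ∀ z ∉ s, |κ z| ≤ c)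
    (hf : ∀ z, ‖f z‖ ≤ M) (z : α) :
    ‖κ z • f z‖ ≤ s.indicator (fun w ↦ |κ w| * M) z + c * ‖f z‖ := by
  rw [norm_smul, Real.norm_eq_abs]
  by_cases hz : z ∈ s
  · rw [indicator_of_mem hz]
    exact le_add_of_le_of_nonneg (by gcongr; exact hf z) (by positivity)
  · rw [indicator_of_notMem hz, zero_add]
    gcongr
    exact hκ z hz

variable [MeasurableSpace α] {ν : Measure α}

theorem integrable_indicator_add (hs : MeasurableSet s) (hκs : IntegrableOn κ s ν)
    (hfi : Integrable f ν) :
    Integrable (fun z ↦ s.indicator (fun w ↦ |κ w| * M) z + c * ‖f z‖) ν :=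
  ((integrable_indicator_iff hs).2 (hκs.abs.mul_const M)).add (hfi.norm.const_mul c)

variable [NormedSpace ℝ G] [AddGroup α] [MeasurableAdd α] [ν.IsAddRightInvariant]

/- The kernel `κ` is split into an integrable part on `s` and a part bounded by `c` off `s`; the
two resulting bounds only involve the translation-invariant quantities `sup ‖f‖` and `∫ ‖f‖`. -/
theorem exists_forall_integral_norm_smul_comp_add_right_le (hs : MeasurableSet s)
    (hκm : Measurable κ) (hκs : IntegrableOn κ s ν) (hc : 0 ≤ c) (hκ : ∀ z ∉ s, |κ z| ≤ c)
    (hfi : Integrable f ν) (hf : ∀ z, ‖f z‖ ≤ M) :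
    ∃ K, ∀ y, Integrable (fun z ↦ κ z • f (z + y)) ν ∧ ∫ z, ‖κ z • f (z + y)‖ ∂ν ≤ K := by
  refine ⟨∫ z in s, |κ z| * M ∂ν + c * ∫ z, ‖f z‖ ∂ν, fun y ↦ ?_⟩
  have hfy : Integrable (fun z ↦ f (z + y)) ν := hfi.comp_add_right y
  have hbound := norm_smul_le_indicator_add hc hκ fun z ↦ hf (z + y)
  have hdom := integrable_indicator_add (M := M) (c := c) hs hκs hfy
  have hint : Integrable (fun z ↦ κ z • f (z + y)) ν :=
    hdom.mono' (hκm.aestronglyMeasurable.smul hfy.1) (.of_forall hbound)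
  refine ⟨hint, (integral_mono hint.norm hdom hbound).trans_eq ?_⟩
  rw [integral_add ((integrable_indicator_iff hs).2 (hκs.abs.mul_const M)) (hfy.norm.const_mul c),
    integral_indicator hs, integral_const_mul, integral_add_right_eq_self (fun z ↦ ‖f z‖) y]

end Translates

section SingularKernels

variable {E G : Type*} [NormedAddCommGroup E] [NormedSpace ℝ E] [FiniteDimensional ℝ E]
  [MeasurableSpace E] [BorelSpace E] {ν : Measure E} [ν.IsAddHaarMeasure]
  [NormedAddCommGroup G] [NormedSpace ℝ G] {f : E → G} {M : ℝ}

theorem exists_forall_integral_norm_inv_smul_le (hE : 2 ≤ finrank ℝ E) (hfi : Integrable f ν)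
    (hf : ∀ z, ‖f z‖ ≤ M) :
    ∃ K, ∀ y, Integrable (fun z ↦ ‖z‖⁻¹ • f (z + y)) ν ∧
      ∫ z, ‖‖z‖⁻¹ • f (z + y)‖ ∂ν ≤ K := by
  refine exists_forall_integral_norm_smul_comp_add_right_le (s := ball 0 1) (c := 1)
    measurableSet_ball (by fun_prop) ?_ zero_le_one (fun z hz ↦ ?_) hfi hf
  · simpa only [pow_one] using integrableOn_ball_norm_pow_inv ν (m := 1) hE 1
  · rw [abs_inv, abs_norm]
    exact inv_le_one_of_one_le₀ (by simpa using hz)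

theorem exists_forall_integral_norm_cosKernel_smul_le (hE : 2 ≤ finrank ℝ E)
    (hfi : Integrable f ν) (hf : ∀ z, ‖f z‖ ≤ M) :
    ∃ K, ∀ k y, Integrable (fun z ↦ cosKernel k z • f (z + y)) ν ∧
      ∫ z, ‖cosKernel k z • f (z + y)‖ ∂ν ≤ K := by
  obtain ⟨K, hK⟩ := exists_forall_integral_norm_inv_smul_le hE hfi hf
  refine ⟨K, fun k y ↦ ?_⟩
  have hint := integrable_cosKernel_smul (hfi.comp_add_right y).1 (hK y).1 k
  refine ⟨hint, (integral_mono hint.norm (hK y).1.norm fun z ↦ ?_).trans (hK y).2⟩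
  simp only [norm_smul, norm_inv, norm_norm]
  gcongr
  exact abs_cosKernel_le k z

-- In dimension two the kernel is not locally integrable, but then the factor `n` vanishes.
theorem exists_forall_integral_norm_natCast_mul_sq_inv_smul_le {n : ℕ}
    (hn : finrank ℝ E = n + 2) (hfi : Integrable f ν) (hf : ∀ z, ‖f z‖ ≤ M) :
    ∃ K, ∀ y, Integrable (fun z ↦ ((n : ℝ) * (‖z‖ ^ 2)⁻¹) • f (z + y)) ν ∧
      ∫ z, ‖((n : ℝ) * (‖z‖ ^ 2)⁻¹) • f (z + y)‖ ∂ν ≤ K := by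
  refine exists_forall_integral_norm_smul_comp_add_right_le (s := ball 0 1) (c := n)
    measurableSet_ball (by fun_prop) ?_ n.cast_nonneg (fun z hz ↦ ?_) hfi hf
  · rcases n.eq_zero_or_pos with rfl | hpos
    · simp only [Nat.cast_zero, zero_mul, integrableOn_zero]
    · exact (integrableOn_ball_norm_pow_inv ν (by omega) 1).const_mul (n : ℝ)
  · have hz' : 1 ≤ ‖z‖ := by simpa using hz
    rw [abs_of_nonneg (by positivity)]
    exact mul_le_of_le_one_right n.cast_nonneg (inv_le_one_of_one_le₀ (one_le_pow₀ hz'))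

theorem exists_forall_integral_norm_radialRemainder_le {n : ℕ} (hn : finrank ℝ E = n + 2)
    {V : E → G} (hVi : Integrable V ν) (hV'i : Integrable (fderiv ℝ V) ν)
    (hVM : ∀ x, ‖V x‖ ≤ M) (hV'M : ∀ x, ‖fderiv ℝ V x‖ ≤ M) :
    ∃ K, ∀ y, Integrable (radialRemainder n fun z ↦ V (z + y)) ν ∧
      ∫ z, ‖radialRemainder n (fun w ↦ V (w + y)) z‖ ∂ν ≤ K := by
  obtain ⟨K₀, hK₀⟩ := exists_forall_integral_norm_natCast_mul_sq_inv_smul_le hn hVi hVM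
  obtain ⟨K₁, hK₁⟩ := exists_forall_integral_norm_inv_smul_le (by omega) hV'i hV'M
  refine ⟨K₀ + K₁, fun y ↦ ?_⟩
  have hbound : ∀ z, ‖radialRemainder n (fun w ↦ V (w + y)) z‖ ≤
      ‖((n : ℝ) * (‖z‖ ^ 2)⁻¹) • V (z + y)‖ + ‖‖z‖⁻¹ • fderiv ℝ V (z + y)‖ := fun z ↦ by
    simpa only [fderiv_comp_add_right] using norm_radialRemainder_le n (fun w ↦ V (w + y)) z
  have hdom : Integrable (fun z ↦ ‖((n : ℝ) * (‖z‖ ^ 2)⁻¹) • V (z + y)‖ +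
      ‖‖z‖⁻¹ • fderiv ℝ V (z + y)‖) ν := (hK₀ y).1.norm.add (hK₁ y).1.norm
  have hmeas : AEStronglyMeasurable (radialRemainder n fun z ↦ V (z + y)) ν := by
    have hVy : AEStronglyMeasurable (fun z ↦ V (z + y)) ν := (hVi.comp_add_right y).1
    have hV'y : AEStronglyMeasurable (fun z ↦ fderiv ℝ (fun w ↦ V (w + y)) z z) ν := by
      simp only [fderiv_comp_add_right]
      exact isBoundedBilinearMap_apply.continuous.comp_aestronglyMeasurable
        ((hV'i.comp_add_right y).1.prodMk aestronglyMeasurable_id)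
    have hpow : Measurable fun z : E ↦ (‖z‖ ^ 2)⁻¹ := by fun_prop
    exact hpow.aestronglyMeasurable.smul ((hVy.const_smul _).add hV'y)
  have hint := hdom.mono' hmeas (.of_forall hbound)
  refine ⟨hint, (integral_mono hint.norm hdom hbound).trans ?_⟩
  rw [integral_add (hK₀ y).1.norm (hK₁ y).1.norm]
  exact add_le_add (hK₀ y).2 (hK₁ y).2

theorem exists_forall_norm_integral_cosKernel_smul_le [CompleteSpace G]
    (hE : 2 ≤ finrank ℝ E) {V : E → G} (hV : Differentiable ℝ V) (hVi : Integrable V ν)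
    (hV'i : Integrable (fderiv ℝ V) ν) (hVM : ∀ x, ‖V x‖ ≤ M) (hV'M : ∀ x, ‖fderiv ℝ V x‖ ≤ M) :
    ∃ K, ∀ k ≠ 0, ∀ y, ‖∫ z, cosKernel k z • V (z + y) ∂ν‖ ≤ K / |k| := by
  obtain ⟨n, hn⟩ := Nat.exists_eq_add_of_le' hE
  obtain ⟨K₀, hK₀⟩ := exists_forall_integral_norm_inv_smul_le hE hVi hVM
  obtain ⟨K, hK⟩ := exists_forall_integral_norm_radialRemainder_le hn hVi hV'i hVM hV'M
  refine ⟨K, fun k hk y ↦ ?_⟩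
  have hVy : Differentiable ℝ fun z ↦ V (z + y) := hV.comp (differentiable_id.add_const y)
  exact (norm_integral_cosKernel_smul_le ν hn hVy (hK₀ y).1 (hK y).1 hk).trans
    (by gcongr; exact (hK y).2)

end SingularKernels

section DoubleIntegral

variable {E 𝔸 : Type*} [AddGroup E] [MeasurableSpace E] [MeasurableAdd E]
  {ν : Measure E} [ν.IsAddRightInvariant] [NormedRing 𝔸] [NormedAlgebra ℝ 𝔸]
  {κ : E → ℝ} {V U : E → 𝔸}

theorem integrable_section_smul_mul (hκV : ∀ y, Integrable (fun z ↦ κ z • V (z + y)) ν)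
    (y : E) : Integrable (fun x ↦ κ (x - y) • (V x * U y)) ν := by
  simpa only [sub_add_cancel, smul_mul_assoc] using ((hκV y).comp_sub_right y).mul_const (U y)

theorem integral_norm_section_smul_mul_le (hκV : ∀ y, Integrable (fun z ↦ κ z • V (z + y)) ν)
    (y : E) :
    ∫ x, ‖κ (x - y) • (V x * U y)‖ ∂ν ≤ (∫ z, ‖κ z • V (z + y)‖ ∂ν) * ‖U y‖ := by
  have hshift := integral_sub_right_eq_self (fun z ↦ ‖κ z • V (z + y)‖) y (μ := ν)
  rw [← hshift, ← integral_mul_const]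
  refine integral_mono (integrable_section_smul_mul hκV y).norm
    (((hκV y).norm.comp_sub_right y).mul_const _) fun x ↦ ?_
  simpa only [sub_add_cancel, smul_mul_assoc] using norm_mul_le (κ (x - y) • V x) (U y)

variable [SFinite ν]

theorem integrable_prod_smul_mul [MeasurableSub₂ E] (hκm : Measurable κ)
    (hV : AEStronglyMeasurable V ν) (hU : Integrable U ν) {K : ℝ}
    (hκV : ∀ y, Integrable (fun z ↦ κ z • V (z + y)) ν)
    (hK : ∀ y, ∫ z, ‖κ z • V (z + y)‖ ∂ν ≤ K) :
    Integrable (fun p : E × E ↦ κ (p.1 - p.2) • (V p.1 * U p.2)) (ν.prod ν) := by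
  have hmeas : AEStronglyMeasurable (fun p : E × E ↦ κ (p.1 - p.2) • (V p.1 * U p.2))
      (ν.prod ν) :=
    (hκm.comp (measurable_fst.sub measurable_snd)).aestronglyMeasurable.smul
      (hV.comp_fst.mul hU.1.comp_snd)
  refine (integrable_prod_iff' hmeas).2 ⟨.of_forall (integrable_section_smul_mul hκV), ?_⟩
  refine (hU.norm.const_mul K).mono' hmeas.norm.prod_swap.integral_prod_right'
    (.of_forall fun y ↦ ?_)
  rw [Real.norm_of_nonneg (integral_nonneg fun _ ↦ norm_nonneg _)]
  exact (integral_norm_section_smul_mul_le hκV y).trans (by gcongr; exact hK y)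

theorem norm_integral_prod_smul_mul_le [CompleteSpace 𝔸] (hU : Integrable U ν)
    (hκV : ∀ y, Integrable (fun z ↦ κ z • V (z + y)) ν)
    (hint : Integrable (fun p : E × E ↦ κ (p.1 - p.2) • (V p.1 * U p.2)) (ν.prod ν)) {B : ℝ}
    (hB : ∀ y, ‖∫ z, κ z • V (z + y) ∂ν‖ ≤ B) :
    ‖∫ p : E × E, κ (p.1 - p.2) • (V p.1 * U p.2) ∂ν.prod ν‖ ≤ B * ∫ y, ‖U y‖ ∂ν := by
  rw [integral_prod_symm _ hint, ← integral_const_mul]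
  refine norm_integral_le_of_norm_le (hU.norm.const_mul B) (.of_forall fun y ↦ ?_)
  have hinner : ∫ x, κ (x - y) • (V x * U y) ∂ν = (∫ z, κ z • V (z + y) ∂ν) * U y := by
    rw [← integral_mul_const_of_integrable (hκV y),
      ← integral_sub_right_eq_self (fun z ↦ κ z • V (z + y) * U y) y]
    simp only [sub_add_cancel, smul_mul_assoc]
  rw [hinner]
  exact (norm_mul_le _ _).trans (by gcongr; exact hB y)

end DoubleIntegral

section JapaneseBracket

variable {δ : ℝ}

theorem one_le_jap (x : E3) : 1 ≤ jap x := by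
  rw [jap, Real.one_le_sqrt]
  exact le_add_of_nonneg_right (sq_nonneg ‖x‖)

theorem integrable_jap_rpow_neg (hδ : 3 < δ) : Integrable fun x : E3 ↦ jap x ^ (-δ) := by
  have hbracket : ∀ x : E3, (1 + ‖x‖ ^ 2) ^ (-δ / 2) = jap x ^ (-δ) := fun x ↦ by
    rw [jap, Real.sqrt_eq_rpow, ← Real.rpow_mul (by positivity)]
    ring_nf
  simpa only [hbracket] using
    integrable_rpow_neg_one_add_norm_sq (E := E3) (μ := volume) (r := δ) (by simpa using hδ)

variable {G : Type*} [NormedAddCommGroup G] {f : E3 → G} {M : ℝ}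

theorem integrable_of_norm_le_jap_rpow_neg (hδ : 3 < δ) (hf : Continuous f)
    (hbound : ∀ x, ‖f x‖ ≤ M * jap x ^ (-δ)) : Integrable f :=
  ((integrable_jap_rpow_neg hδ).const_mul M).mono' hf.aestronglyMeasurable (.of_forall hbound)

theorem norm_le_of_norm_le_jap_rpow_neg (hδ : 0 ≤ δ) (hM : 0 ≤ M)
    (hbound : ∀ x, ‖f x‖ ≤ M * jap x ^ (-δ)) (x : E3) : ‖f x‖ ≤ M :=
  (hbound x).trans <| mul_le_of_le_one_right hM <|
    Real.rpow_le_one_of_one_le_of_nonpos (one_le_jap x) (neg_nonpos.2 hδ)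

end JapaneseBracket

theorem stmt15_general {E 𝔸 : Type*} [NormedAddCommGroup E] [NormedSpace ℝ E]
    [FiniteDimensional ℝ E] [MeasurableSpace E] [BorelSpace E] [NormedRing 𝔸] [NormedAlgebra ℝ 𝔸]
    [CompleteSpace 𝔸] (ν : Measure E) [ν.IsAddHaarMeasure] (hE : 2 ≤ finrank ℝ E) {V U : E → 𝔸}
    {M : ℝ} (hV : Differentiable ℝ V) (hVi : Integrable V ν) (hV'i : Integrable (fderiv ℝ V) ν)
    (hVM : ∀ x, ‖V x‖ ≤ M) (hV'M : ∀ x, ‖fderiv ℝ V x‖ ≤ M) (hU : Integrable U ν) :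
    ∃ C : ℝ, 0 < C ∧ ∀ μ : ℝ, 0 < μ →
      Integrable (fun p : E × E ↦ cosKernel (2 * μ) (p.1 - p.2) • (V p.1 * U p.2)) (ν.prod ν) ∧
      ‖∫ p : E × E, cosKernel (2 * μ) (p.1 - p.2) • (V p.1 * U p.2) ∂ν.prod ν‖ ≤ C / μ := by
  obtain ⟨K, hK⟩ := exists_forall_integral_norm_cosKernel_smul_le hE hVi hVM
  obtain ⟨B, hB⟩ := exists_forall_norm_integral_cosKernel_smul_le hE hV hVi hV'i hVM hV'M
  have hB₀ : 0 ≤ B := by simpa using (norm_nonneg _).trans (hB 1 one_ne_zero 0)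
  refine ⟨(B * ∫ y, ‖U y‖ ∂ν) + 1, by positivity, fun μ hμ ↦ ?_⟩
  have hint := integrable_prod_smul_mul (measurable_cosKernel (2 * μ)) hVi.1 hU
    (fun y ↦ (hK (2 * μ) y).1) fun y ↦ (hK (2 * μ) y).2
  refine ⟨hint, ?_⟩
  calc ‖∫ p : E × E, cosKernel (2 * μ) (p.1 - p.2) • (V p.1 * U p.2) ∂ν.prod ν‖
      ≤ B / |2 * μ| * ∫ y, ‖U y‖ ∂ν :=
        norm_integral_prod_smul_mul_le hU (fun y ↦ (hK (2 * μ) y).1) hint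
          (hB (2 * μ) (by positivity))
    _ ≤ B / μ * ∫ y, ‖U y‖ ∂ν := by
        gcongr
        exact (le_abs_self _).trans' (by linarith)
    _ ≤ ((B * ∫ y, ‖U y‖ ∂ν) + 1) / μ := by
        rw [div_mul_eq_mul_div]
        gcongr
        exact le_add_of_nonneg_right zero_le_one

/-- Let `δ > 3` and let `V : ℝ³ → ℂ` be continuously differentiable
with `|V(x)| ≤ M ⟨x⟩^{-δ}` and `|∇V(x)| ≤ M ⟨x⟩^{-δ}` for some `M > 0`. Then there is
`C > 0` such that for all `μ ≥ 1`,
`|∫∫ V(x)V(y) cos(2μ|x-y|) |x-y|⁻¹ dx dy| ≤ C/μ`. -/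
theorem stmt15 (δ : ℝ) (hδ : 3 < δ) (M : ℝ) (hM : 0 < M)
    (V : E3 → ℂ) (hV : ContDiff ℝ 1 V)
    (hbound : ∀ x : E3, ‖V x‖ ≤ M * jap x ^ (-δ))
    (hbound' : ∀ x : E3, ‖fderiv ℝ V x‖ ≤ M * jap x ^ (-δ)) :
    ∃ C : ℝ, 0 < C ∧ ∀ μ : ℝ, 1 ≤ μ →
      ‖∫ p : E3 × E3,
          V p.1 * V p.2 * ((Real.cos (2 * μ * ‖p.1 - p.2‖) : ℝ) : ℂ)
            * ((‖p.1 - p.2‖⁻¹ : ℝ) : ℂ)‖ ≤ C / μ := by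
  have hVi := integrable_of_norm_le_jap_rpow_neg hδ hV.continuous hbound
  have hV'i := integrable_of_norm_le_jap_rpow_neg hδ (hV.continuous_fderiv one_ne_zero) hbound'
  obtain ⟨C, hC, hdecay⟩ := stmt15_general volume (by simp) (hV.differentiable one_ne_zero) hVi hV'i
    (norm_le_of_norm_le_jap_rpow_neg (by linarith) hM.le hbound)
    (norm_le_of_norm_le_jap_rpow_neg (by linarith) hM.le hbound') hVi
  refine ⟨C, hC, fun μ hμ ↦ ?_⟩
  simpa only [cosKernel, Complex.real_smul, Complex.ofReal_mul, mul_comm, mul_left_comm, mul_assoc,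
    Measure.volume_eq_prod] using (hdecay μ (by linarith)).2
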